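/- Let T be an L-theory whose class of models is preserved under unions of chains, i.e. whenever (Mᵢ)_{i<ω} is an increasing chain of models of T, the metric completion of the union ⋃ᵢ Mᵢ is also a model of T. Then T is inductive, i.e. T is axiomatizable by open conditions of the form sup_x̄ inf_ȳ φ(x̄,ȳ) < ε with φ quantifier-free. -/

import Mathlib

open scoped Classical

/-! ### A core of continuous first-order logic (countable relational signatures) -/

/-- A countable relational continuous signature: relation symbols indexed by `ℕ`
(with a distinguished metric symbol handled separately in the syntax below),
each with an arity and a prescribed uniform-continuity modulus. -/
structure CSig where
  arity : ℕ → ℕ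
  modulus : ℕ → ℝ → ℝ
  modulus_pos : ∀ i ε, 0 < ε → 0 < modulus i ε

/-- Continuous first-order formulas over `S`, with free variables among `Fin n`.
Connectives: rational constants, pointwise min and max, negation `1 - x`,
truncated plus, truncated minus, `|x - y|`, rescaling by rationals; quantifiers
`inf` and `sup` bind the last variable. -/
inductive CFormula (S : CSig) : ℕ → Type
  | dst : ∀ {n}, Fin n → Fin n → CFormula S n
  | rel : ∀ {n} (i : ℕ), (Fin (S.arity i) → Fin n) → CFormula S n
  | const : ∀ {n}, ℚ → CFormula S n
  | fmin : ∀ {n}, CFormula S n → CFormula S n → CFormula S n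
  | fmax : ∀ {n}, CFormula S n → CFormula S n → CFormula S n
  | neg : ∀ {n}, CFormula S n → CFormula S n
  | addT : ∀ {n}, CFormula S n → CFormula S n → CFormula S n
  | subT : ∀ {n}, CFormula S n → CFormula S n → CFormula S n
  | absd : ∀ {n}, CFormula S n → CFormula S n → CFormula S n
  | scale : ∀ {n}, ℚ → CFormula S n → CFormula S n
  | inf : ∀ {n}, CFormula S (n + 1) → CFormula S n
  | sup : ∀ {n}, CFormula S (n + 1) → CFormula S n

/-- Sentences: formulas with no free variables. -/
abbrev CSentence (S : CSig) := CFormula S 0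

/-- Quantifier-free formulas. -/
inductive IsQF {S : CSig} : ∀ {n}, CFormula S n → Prop
  | dst {n} (a b : Fin n) : IsQF (CFormula.dst a b)
  | rel {n} (i : ℕ) (ts : Fin (S.arity i) → Fin n) : IsQF (CFormula.rel i ts)
  | const {n} (q : ℚ) : IsQF (CFormula.const (n := n) q)
  | fmin {n} {φ ψ : CFormula S n} : IsQF φ → IsQF ψ → IsQF (CFormula.fmin φ ψ)
  | fmax {n} {φ ψ : CFormula S n} : IsQF φ → IsQF ψ → IsQF (CFormula.fmax φ ψ)
  | neg {n} {φ : CFormula S n} : IsQF φ → IsQF (CFormula.neg φ)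
  | addT {n} {φ ψ : CFormula S n} : IsQF φ → IsQF ψ → IsQF (CFormula.addT φ ψ)
  | subT {n} {φ ψ : CFormula S n} : IsQF φ → IsQF ψ → IsQF (CFormula.subT φ ψ)
  | absd {n} {φ ψ : CFormula S n} : IsQF φ → IsQF ψ → IsQF (CFormula.absd φ ψ)
  | scale {n} (q : ℚ) {φ : CFormula S n} : IsQF φ → IsQF (CFormula.scale q φ)

/-- Closure of a class of formulas under (finitely many applications of) `inf`. -/
inductive InfCl {S : CSig} (P : ∀ n, CFormula S n → Prop) : ∀ {n}, CFormula S n → Prop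
  | base {n} {φ : CFormula S n} : P n φ → InfCl P φ
  | step {n} {φ : CFormula S (n + 1)} : InfCl P φ → InfCl P (CFormula.inf φ)

/-- Closure of a class of formulas under (finitely many applications of) `sup`. -/
inductive SupCl {S : CSig} (P : ∀ n, CFormula S n → Prop) : ∀ {n}, CFormula S n → Prop
  | base {n} {φ : CFormula S n} : P n φ → SupCl P φ
  | step {n} {φ : CFormula S (n + 1)} : SupCl P φ → SupCl P (CFormula.sup φ)

/-- The pair (Σₖ, Πₖ) of formula classes: Σ₀ = Π₀ = quantifier-free,
Σ_{k+1} = { inf_x̄ φ : φ ∈ Πₖ }, Π_{k+1} = { sup_x̄ φ : φ ∈ Σₖ }. -/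
def SigmaPi (S : CSig) : ℕ → ((∀ n, CFormula S n → Prop) × (∀ n, CFormula S n → Prop))
  | 0 => (fun _ φ => IsQF φ, fun _ φ => IsQF φ)
  | k + 1 => (fun _ φ => InfCl (SigmaPi S k).2 φ, fun _ φ => SupCl (SigmaPi S k).1 φ)

/-- `φ` is a Σₖ formula. -/
def IsSigmaN (S : CSig) (k : ℕ) {n : ℕ} (φ : CFormula S n) : Prop := (SigmaPi S k).1 n φ

/-- `φ` is a Πₖ formula. -/
def IsPiN (S : CSig) (k : ℕ) {n : ℕ} (φ : CFormula S n) : Prop := (SigmaPi S k).2 n φ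

/-- A continuous `L`-structure: a nonempty complete metric space of diameter `≤ 1`
with `[0,1]`-valued interpretations of all predicate symbols, uniformly continuous
with respect to the prescribed moduli. -/
structure CStructure (S : CSig) where
  Carrier : Type
  metric : MetricSpace Carrier
  nonempty : Nonempty Carrier
  complete : @CompleteSpace Carrier metric.toUniformSpace
  bounded : ∀ x y : Carrier, @dist Carrier metric.toDist x y ≤ 1
  rel : ∀ i, (Fin (S.arity i) → Carrier) → ℝ
  rel_nonneg : ∀ i v, 0 ≤ rel i v
  rel_le_one : ∀ i v, rel i v ≤ 1
  rel_uc : ∀ i (ε : ℝ), 0 < ε → ∀ v w,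
    (∀ j, @dist Carrier metric.toDist (v j) (w j) < S.modulus i ε) → |rel i v - rel i w| ≤ ε

attribute [instance] CStructure.metric CStructure.nonempty CStructure.complete

/-- Clamp a rational constant into `[0,1]`. -/
noncomputable def clampQ (q : ℚ) : ℝ := max 0 (min 1 (q : ℝ))

/-- The value of a formula in a structure under a variable assignment. -/
noncomputable def CStructure.eval {S : CSig} (M : CStructure S) :
    ∀ (n : ℕ), CFormula S n → (Fin n → M.Carrier) → ℝ
  | _, .dst a b, v => dist (v a) (v b)
  | _, .rel i ts, v => M.rel i fun j => v (ts j)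
  | _, .const q, _ => clampQ q
  | n, .fmin φ ψ, v => min (M.eval n φ v) (M.eval n ψ v)
  | n, .fmax φ ψ, v => max (M.eval n φ v) (M.eval n ψ v)
  | n, .neg φ, v => 1 - M.eval n φ v
  | n, .addT φ ψ, v => min 1 (M.eval n φ v + M.eval n ψ v)
  | n, .subT φ ψ, v => max 0 (M.eval n φ v - M.eval n ψ v)
  | n, .absd φ ψ, v => |M.eval n φ v - M.eval n ψ v|
  | n, .scale q φ, v => clampQ q * M.eval n φ v
  | n, .inf φ, v => ⨅ x : M.Carrier, M.eval (n + 1) φ (Fin.snoc v x)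
  | n, .sup φ, v => ⨆ x : M.Carrier, M.eval (n + 1) φ (Fin.snoc v x)

/-- The value of a sentence in a structure. -/
noncomputable def CStructure.sval {S : CSig} (M : CStructure S) (φ : CSentence S) : ℝ :=
  M.eval 0 φ (fun i => i.elim0)

/-- A theory: a set of closed conditions `φ ≤ ε`, coded as pairs `(φ, ε)`. -/
abbrev CTheory (S : CSig) := Set (CSentence S × ℝ)

/-- `M` satisfies the theory `T` (all its closed conditions). -/
def CStructure.SatT {S : CSig} (M : CStructure S) (T : CTheory S) : Prop :=
  ∀ c ∈ T, M.sval c.1 ≤ c.2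

/-- The closed condition `φ ≤ ε` follows from `T`. -/
def Entails {S : CSig} (T : CTheory S) (c : CSentence S × ℝ) : Prop :=
  ∀ M : CStructure S, M.SatT T → M.sval c.1 ≤ c.2

/-- The open condition `φ < ε` follows from `T`. -/
def EntailsOpen {S : CSig} (T : CTheory S) (c : CSentence S × ℝ) : Prop :=
  ∀ M : CStructure S, M.SatT T → M.sval c.1 < c.2

/-- `T` is a theory in the official sense: consistent and closed under entailment. -/
def IsTheory {S : CSig} (T : CTheory S) : Prop :=
  (∃ M : CStructure S, M.SatT T) ∧ ∀ c, Entails T c → c ∈ T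

/-- `T` is universal: axiomatizable by closed conditions `sup_x̄ φ(x̄) = 0` with `φ`
quantifier-free (i.e. by conditions `ψ = 0` for Π₁ sentences `ψ`). -/
def IsUniversalTheory {S : CSig} (T : CTheory S) : Prop :=
  ∃ A : Set (CSentence S), (∀ ψ ∈ A, IsPiN S 1 ψ) ∧
    ∀ M : CStructure S, (M.SatT T ↔ ∀ ψ ∈ A, M.sval ψ = 0)

/-- `T` is inductive: axiomatizable by open conditions `sup_x̄ inf_ȳ φ(x̄,ȳ) < ε` with `φ`
quantifier-free (i.e. by open conditions on Π₂ sentences). -/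
def IsInductiveTheory {S : CSig} (T : CTheory S) : Prop :=
  ∃ A : Set (CSentence S × ℝ), (∀ c ∈ A, IsPiN S 2 c.1 ∧ 0 < c.2) ∧
    ∀ M : CStructure S, (M.SatT T ↔ ∀ c ∈ A, M.sval c.1 < c.2)

/-- An embedding of continuous structures: an isometric map preserving all predicates. -/
structure CEmbedding {S : CSig} (M N : CStructure S) where
  toFun : M.Carrier → N.Carrier
  isometry : ∀ x y, dist (toFun x) (toFun y) = dist x y
  map_rel : ∀ i (v : Fin (S.arity i) → M.Carrier), N.rel i (toFun ∘ v) = M.rel i v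

/-- An embedding is elementary if it preserves the values of all formulas. -/
def CEmbedding.Elementary {S : CSig} {M N : CStructure S} (f : CEmbedding M N) : Prop :=
  ∀ (n : ℕ) (φ : CFormula S n) (v : Fin n → M.Carrier),
    N.eval n φ (f.toFun ∘ v) = M.eval n φ v

/-- `T` is model complete: every embedding between models of `T` is elementary. -/
def IsModelComplete {S : CSig} (T : CTheory S) : Prop :=
  ∀ M N : CStructure S, M.SatT T → N.SatT T → ∀ f : CEmbedding M N, f.Elementary

/-- `M` is an existentially closed model of `T`. -/
def IsEC {S : CSig} (T : CTheory S) (M : CStructure S) : Prop :=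
  M.SatT T ∧ ∀ N : CStructure S, N.SatT T → ∀ f : CEmbedding M N,
    ∀ (n : ℕ) (φ : CFormula S (n + 1)), IsQF φ → ∀ b : Fin n → M.Carrier,
      N.eval n (CFormula.inf φ) (f.toFun ∘ b) = M.eval n (CFormula.inf φ) b

/-- `T'` is the model companion of `T`: the models of `T'` are exactly the
existentially closed models of `T`. -/
def IsModelCompanion {S : CSig} (T T' : CTheory S) : Prop :=
  ∀ M : CStructure S, (M.SatT T' ↔ IsEC T M)

/-- `T'` is ℵ₀-categorical: any two separable models of `T'` are isomorphic. -/
def Aleph0Categorical {S : CSig} (T' : CTheory S) : Prop :=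
  ∀ M N : CStructure S, M.SatT T' → N.SatT T' →
    TopologicalSpace.SeparableSpace M.Carrier → TopologicalSpace.SeparableSpace N.Carrier →
    ∃ f : CEmbedding M N, Function.Surjective f.toFun

/-! Let `M` satisfy all open Π₂ conditions that follow from `T`. By compactness, `M` has an
existentially closed embedding into some `N ⊨ T`: if `φ(a, y) = 0` for a quantifier-free `φ` and
all `y` in `M`, then `sup_x inf_y (1 - φ(x, y)) < 1` fails in `M`, so it fails in some model of `T`.
Existential closedness in turn lets `N` embed into some `M'` such that the composite `M → M'` is
elementary; in particular `M'` again satisfies the open Π₂ conditions. Iterating gives a chain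
`M₀ → N₀ → M₁ → N₁ → ⋯`, whose completed union is a model of `T`, being the union of the `Nᵢ`, and
an elementary extension of `M₀ = M`, being the union of the elementary chain of the `Mᵢ`. -/

section Development

open Filter Topology

variable {S : CSig}

/-! ### Evaluation of formulas -/

theorem clampQ_mem_Icc (q : ℚ) : clampQ q ∈ Set.Icc (0 : ℝ) 1 :=
  ⟨le_max_left _ _, max_le zero_le_one (min_le_left _ _)⟩

theorem clampQ_of_mem_Icc {q : ℚ} (hq : (q : ℝ) ∈ Set.Icc (0 : ℝ) 1) : clampQ q = q := by
  rw [clampQ, min_eq_right hq.2, max_eq_right hq.1]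

theorem le_of_forall_le_clampQ {r t : ℝ} (hr : 0 ≤ r) (ht : t ≤ 1)
    (h : ∀ q : ℚ, r ≤ clampQ q → t ≤ clampQ q) : t ≤ r := by
  by_contra! hrt
  obtain ⟨q, hrq, hqt⟩ := exists_rat_btwn hrt
  have hq : clampQ q = q := clampQ_of_mem_Icc ⟨hr.trans hrq.le, hqt.le.trans ht⟩
  exact (h q (hq ▸ hrq.le)).not_gt (hq ▸ hqt)

namespace CStructure

variable (M : CStructure S) {n : ℕ}

theorem eval_mem_Icc (φ : CFormula S n) (v : Fin n → M.Carrier) :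
    M.eval n φ v ∈ Set.Icc (0 : ℝ) 1 := by
  induction φ with
  | dst a b => exact ⟨dist_nonneg, M.bounded _ _⟩
  | rel i ts => exact ⟨M.rel_nonneg _ _, M.rel_le_one _ _⟩
  | const q => exact clampQ_mem_Icc q
  | fmin φ ψ hφ hψ => exact ⟨le_min (hφ v).1 (hψ v).1, (min_le_left _ _).trans (hφ v).2⟩
  | fmax φ ψ hφ hψ => exact ⟨(hφ v).1.trans (le_max_left _ _), max_le (hφ v).2 (hψ v).2⟩
  | neg φ hφ => exact ⟨sub_nonneg.2 (hφ v).2, sub_le_self _ (hφ v).1⟩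
  | addT φ ψ hφ hψ =>
    exact ⟨le_min zero_le_one (add_nonneg (hφ v).1 (hψ v).1), min_le_left _ _⟩
  | subT φ ψ hφ hψ =>
    exact ⟨le_max_left _ _, max_le zero_le_one ((sub_le_self _ (hψ v).1).trans (hφ v).2)⟩
  | absd φ ψ hφ hψ =>
    exact ⟨abs_nonneg _, abs_sub_le_of_nonneg_of_le (hφ v).1 (hφ v).2 (hψ v).1 (hψ v).2⟩
  | scale q φ hφ =>
    have hq := clampQ_mem_Icc q
    exact ⟨mul_nonneg hq.1 (hφ v).1, mul_le_one₀ hq.2 (hφ v).1 (hφ v).2⟩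
  | inf φ hφ =>
    obtain ⟨x⟩ := M.nonempty
    exact ⟨le_ciInf fun y => (hφ _).1,
      (ciInf_le ⟨0, Set.forall_mem_range.2 fun y => (hφ _).1⟩ x).trans (hφ _).2⟩
  | sup φ hφ =>
    obtain ⟨x⟩ := M.nonempty
    exact ⟨(hφ (Fin.snoc v x)).1.trans
      (le_ciSup (f := fun y => M.eval _ φ (Fin.snoc v y))
        ⟨1, Set.forall_mem_range.2 fun y => (hφ _).2⟩ x), ciSup_le fun y => (hφ _).2⟩

theorem eval_nonneg (φ : CFormula S n) (v : Fin n → M.Carrier) : 0 ≤ M.eval n φ v :=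
  (M.eval_mem_Icc φ v).1

theorem eval_le_one (φ : CFormula S n) (v : Fin n → M.Carrier) : M.eval n φ v ≤ 1 :=
  (M.eval_mem_Icc φ v).2

theorem eval_neg (φ : CFormula S n) (v : Fin n → M.Carrier) :
    M.eval n (.neg φ) v = 1 - M.eval n φ v := by
  rw [eval]

theorem eval_const (q : ℚ) (v : Fin n → M.Carrier) : M.eval n (.const q) v = clampQ q := by
  rw [eval]

theorem eval_subT_nonpos_iff (φ ψ : CFormula S n) (v : Fin n → M.Carrier) :
    M.eval n (.subT φ ψ) v ≤ 0 ↔ M.eval n φ v ≤ M.eval n ψ v := by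
  simp only [eval, max_le_iff, le_refl, true_and, sub_nonpos]

theorem eval_inf_le (φ : CFormula S (n + 1)) (v : Fin n → M.Carrier) (x : M.Carrier) :
    M.eval n (.inf φ) v ≤ M.eval (n + 1) φ (Fin.snoc v x) := by
  rw [eval]
  exact ciInf_le ⟨0, Set.forall_mem_range.2 fun _ => M.eval_nonneg φ _⟩ x

theorem le_eval_inf {φ : CFormula S (n + 1)} {v : Fin n → M.Carrier} {r : ℝ}
    (h : ∀ x, r ≤ M.eval (n + 1) φ (Fin.snoc v x)) : r ≤ M.eval n (.inf φ) v := by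
  rw [eval]
  exact le_ciInf h

theorem exists_eval_snoc_lt {φ : CFormula S (n + 1)} {v : Fin n → M.Carrier} {r : ℝ}
    (h : M.eval n (.inf φ) v < r) : ∃ x, M.eval (n + 1) φ (Fin.snoc v x) < r := by
  rw [eval] at h
  exact exists_lt_of_ciInf_lt h

theorem le_eval_sup (φ : CFormula S (n + 1)) (v : Fin n → M.Carrier) (x : M.Carrier) :
    M.eval (n + 1) φ (Fin.snoc v x) ≤ M.eval n (.sup φ) v :=
  le_ciSup (f := fun y => M.eval (n + 1) φ (Fin.snoc v y))
    ⟨1, Set.forall_mem_range.2 fun _ => M.eval_le_one φ _⟩ x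

theorem eval_sup_le {φ : CFormula S (n + 1)} {v : Fin n → M.Carrier} {r : ℝ}
    (h : ∀ x, M.eval (n + 1) φ (Fin.snoc v x) ≤ r) : M.eval n (.sup φ) v ≤ r := by
  rw [eval]
  exact ciSup_le h

theorem eval_sup_eq (φ : CFormula S (n + 1)) (v : Fin n → M.Carrier) :
    M.eval n (.sup φ) v = 1 - M.eval n (.inf (.neg φ)) v := by
  refine le_antisymm (M.eval_sup_le fun x => ?_) (sub_le_comm.1 (M.le_eval_inf fun x => ?_))
  · have hinf := M.eval_inf_le (.neg φ) v x
    rw [eval_neg] at hinf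
    exact le_sub_comm.1 hinf
  · rw [eval_neg]
    exact sub_le_sub_left (M.le_eval_sup φ v x) 1

theorem sval_eq_eval (φ : CSentence S) (v : Fin 0 → M.Carrier) : M.sval φ = M.eval 0 φ v :=
  congrArg (M.eval 0 φ) (Subsingleton.elim _ _)

end CStructure

/-! ### Moduli of uniform continuity -/

/-- `m` is a modulus of uniform continuity for the predicate `R` of several variables, in the
sense required of the predicate symbols of a `CStructure`. -/
def HasModulus {κ X : Type*} [PseudoMetricSpace X] (m : ℝ → ℝ) (R : (κ → X) → ℝ) : Prop :=
  ∀ ε, 0 < ε → ∀ v w, (∀ j, dist (v j) (w j) < m ε) → |R v - R w| ≤ ε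

namespace HasModulus

variable {κ X : Type*} [Finite κ] [PseudoMetricSpace X] {m : ℝ → ℝ}

theorem uniformContinuous {R : (κ → X) → ℝ} (h : HasModulus m R) (hm : ∀ ε, 0 < ε → 0 < m ε) :
    UniformContinuous R := by
  cases nonempty_fintype κ
  refine Metric.uniformContinuous_iff.2 fun ε hε =>
    ⟨m (ε / 2), hm _ (half_pos hε), fun {v w} hvw => ?_⟩
  have hle := h (ε / 2) (half_pos hε) v w fun j => (dist_le_pi_dist v w j).trans_lt hvw
  exact hle.trans_lt (half_lt_self hε)

theorem of_denseRange {Y : Type*} [PseudoMetricSpace Y] {c : X → Y} (hc : Isometry c)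
    (hd : DenseRange c) {F : (κ → Y) → ℝ} (hF : Continuous F)
    (h : HasModulus m fun v : κ → X => F (c ∘ v)) : HasModulus m F := by
  cases nonempty_fintype κ
  intro ε hε v w hvw
  by_contra! hlt
  let O : Set ((κ → Y) × (κ → Y)) :=
    {p | ε < |F p.1 - F p.2|} ∩ ⋂ j, {p | dist (p.1 j) (p.2 j) < m ε}
  have hO : IsOpen O :=
    (isOpen_lt (by fun_prop) (by fun_prop)).inter
      (isOpen_iInter_of_finite fun j => isOpen_lt (by fun_prop) (by fun_prop))
  have hdense : DenseRange fun v : κ → X => c ∘ v := DenseRange.piMap fun _ => hd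
  obtain ⟨⟨a, b⟩, hab, hdist⟩ :=
    (hdense.prodMap hdense).exists_mem_open hO ⟨(v, w), hlt, Set.mem_iInter.2 hvw⟩
  refine (h ε hε a b fun j => ?_).not_gt hab
  rw [← hc.dist_eq]
  exact Set.mem_iInter.1 hdist j

theorem exists_extension {R : (κ → X) → ℝ} (h : HasModulus m R) (hm : ∀ ε, 0 < ε → 0 < m ε) :
    ∃ F : (κ → UniformSpace.Completion X) → ℝ,
      Continuous F ∧ HasModulus m F ∧ ∀ v : κ → X, F (fun j => v j) = R v := by
  cases nonempty_fintype κ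
  have hc : Isometry ((↑) : X → UniformSpace.Completion X) :=
    UniformSpace.Completion.coe_isometry
  have hd : DenseRange ((↑) : X → UniformSpace.Completion X) :=
    UniformSpace.Completion.denseRange_coe
  have hind : IsUniformInducing fun (v : κ → X) j => (v j : UniformSpace.Completion X) :=
    (Isometry.piMap _ fun _ => hc).isUniformInducing
  have hdense : DenseRange fun (v : κ → X) j => (v j : UniformSpace.Completion X) :=
    DenseRange.piMap fun _ => hd
  have hR := h.uniformContinuous hm
  have hF := (uniformContinuous_uniformly_extend hind hdense hR).continuous
  have hext := (hind.isDenseInducing hdense).extend_eq hR.continuous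
  refine ⟨_, hF, of_denseRange hc hd hF ?_, hext⟩
  simpa only [Function.comp_def, hext] using h

end HasModulus

namespace CStructure

theorem dist_snoc_le {X : Type*} [PseudoMetricSpace X] {n : ℕ} (v w : Fin n → X) (x : X) :
    dist (Fin.snoc v x : Fin (n + 1) → X) (Fin.snoc w x) ≤ dist v w := by
  refine (dist_pi_le_iff dist_nonneg).2 (Fin.lastCases ?_ fun j => ?_)
  · simp
  · simpa using dist_le_pi_dist v w j

variable (M : CStructure S) {n : ℕ}

theorem uniformContinuous_eval_neg {φ : CFormula S n} (h : UniformContinuous (M.eval n φ)) :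
    UniformContinuous (M.eval n (.neg φ)) := by
  simpa only [funext (M.eval_neg φ)] using uniformContinuous_const.sub h

theorem uniformContinuous_eval_inf {φ : CFormula S (n + 1)}
    (h : UniformContinuous (M.eval (n + 1) φ)) : UniformContinuous (M.eval n (.inf φ)) := by
  refine Metric.uniformContinuous_iff.2 fun ε hε => ?_
  obtain ⟨δ, hδ, hφ⟩ := Metric.uniformContinuous_iff.1 h (ε / 2) (half_pos hε)
  have hle (v w : Fin n → M.Carrier) (hvw : dist v w < δ) :
      M.eval n (.inf φ) v - ε / 2 ≤ M.eval n (.inf φ) w := by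
    refine M.le_eval_inf fun x => ?_
    have hinf := M.eval_inf_le φ v x
    have hclose := hφ ((dist_snoc_le v w x).trans_lt hvw)
    rw [Real.dist_eq, abs_lt] at hclose
    linarith [hclose.2]
  refine ⟨δ, hδ, fun {v w} hvw => ?_⟩
  have hv := hle v w hvw
  have hw := hle w v (dist_comm v w ▸ hvw)
  rw [Real.dist_eq, abs_lt]
  constructor <;> linarith

theorem uniformContinuous_eval (φ : CFormula S n) : UniformContinuous (M.eval n φ) := by
  induction φ with
  | dst a b =>
    exact (Pi.uniformContinuous_proj _ a).dist (Pi.uniformContinuous_proj _ b)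
  | rel i ts =>
    exact (HasModulus.uniformContinuous (M.rel_uc i) (S.modulus_pos i)).comp
      (uniformContinuous_pi.2 fun j => Pi.uniformContinuous_proj _ (ts j))
  | const q => exact uniformContinuous_const
  | fmin φ ψ hφ hψ => exact lipschitzWith_min.uniformContinuous.comp (hφ.prodMk hψ)
  | fmax φ ψ hφ hψ => exact lipschitzWith_max.uniformContinuous.comp (hφ.prodMk hψ)
  | neg φ hφ => exact M.uniformContinuous_eval_neg hφ
  | addT φ ψ hφ hψ =>
    exact lipschitzWith_min.uniformContinuous.comp (uniformContinuous_const.prodMk (hφ.add hψ))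
  | subT φ ψ hφ hψ =>
    exact lipschitzWith_max.uniformContinuous.comp (uniformContinuous_const.prodMk (hφ.sub hψ))
  | absd φ ψ hφ hψ => exact Real.uniformContinuous_abs.comp (hφ.sub hψ)
  | scale q φ hφ => exact hφ.const_mul' _
  | inf φ hφ => exact M.uniformContinuous_eval_inf hφ
  | sup φ hφ =>
    simpa only [funext (M.eval_sup_eq φ)] using uniformContinuous_const.sub
      (M.uniformContinuous_eval_inf (M.uniformContinuous_eval_neg hφ))

theorem continuous_eval (φ : CFormula S n) : Continuous (M.eval n φ) :=
  (M.uniformContinuous_eval φ).continuous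

end CStructure

/-! ### Limits of structures along a filter -/

theorem exists_completion (X : Type) [PseudoMetricSpace X] [Nonempty X]
    (hX : ∀ x y : X, dist x y ≤ 1) (R : ∀ i, (Fin (S.arity i) → X) → ℝ)
    (hR : ∀ i v, R i v ∈ Set.Icc (0 : ℝ) 1) (hRm : ∀ i, HasModulus (S.modulus i) (R i)) :
    ∃ (C : CStructure S) (ι : X → C.Carrier), DenseRange ι ∧
      (∀ x y, dist (ι x) (ι y) = dist x y) ∧ ∀ i v, C.rel i (ι ∘ v) = R i v := by
  choose F hFc hFm hFR using fun i => (hRm i).exists_extension (S.modulus_pos i)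
  have hFI (i) (v : Fin (S.arity i) → UniformSpace.Completion X) : F i v ∈ Set.Icc (0 : ℝ) 1 := by
    refine (DenseRange.piMap fun _ => UniformSpace.Completion.denseRange_coe).induction_on v
      (isClosed_Icc.preimage (hFc i)) fun w => ?_
    have hw := hR i w
    rwa [← hFR] at hw
  refine ⟨{ Carrier := UniformSpace.Completion X
            metric := inferInstance
            nonempty := ‹Nonempty X›.map (↑)
            complete := inferInstance
            bounded := fun x y => ?_
            rel := F
            rel_nonneg := fun i v => (hFI i v).1
            rel_le_one := fun i v => (hFI i v).2
            rel_uc := hFm },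
    ((↑) : X → UniformSpace.Completion X), UniformSpace.Completion.denseRange_coe,
    UniformSpace.Completion.dist_eq, hFR⟩
  refine UniformSpace.Completion.induction_on₂ x y
    (isClosed_le (by fun_prop) continuous_const) fun a b => ?_
  rw [UniformSpace.Completion.dist_eq]
  exact hX a b

/-- `C`, with the map `ι` from an index type of threads, is a limit of the structures `M i` along
the filter `l`: the images of the threads `e x` are dense, and the metric and all predicates of
`C` are limits of those of the `M i`. Ultraproducts (all threads, an ultrafilter) and completed
unions of chains (eventually constant threads) are both of this form. -/
structure IsLimitStructure {I X : Type*} (l : Filter I) (M : I → CStructure S)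
    (e : X → ∀ i, (M i).Carrier) (C : CStructure S) (ι : X → C.Carrier) : Prop where
  denseRange : DenseRange ι
  tendsto_dist : ∀ x y, Tendsto (fun i => dist (e x i) (e y i)) l (𝓝 (dist (ι x) (ι y)))
  tendsto_rel : ∀ r (v : Fin (S.arity r) → X),
    Tendsto (fun i => (M i).rel r fun j => e (v j) i) l (𝓝 (C.rel r (ι ∘ v)))

/-- The Tarski–Vaught condition along `l`: the threads `e` contain approximate witnesses, uniform
in the index, for the infima over the structures `M i`. It is what Łoś's theorem needs of the
threads of a limit. -/
def HasWitnesses {I X : Type*} (l : Filter I) (M : I → CStructure S)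
    (e : X → ∀ i, (M i).Carrier) : Prop :=
  ∀ (n : ℕ) (φ : CFormula S (n + 1)) (v : Fin n → X) (ε : ℝ), 0 < ε → ∃ x, ∀ᶠ i in l,
    (M i).eval (n + 1) φ (Fin.snoc (fun j => e (v j) i) (e x i)) ≤
      (M i).eval n (.inf φ) (fun j => e (v j) i) + ε

theorem exists_tendsto_of_mem_Icc {I : Type*} (U : Ultrafilter I) {f : I → ℝ} {a b : ℝ}
    (h : ∀ i, f i ∈ Set.Icc a b) : ∃ L, Tendsto f U (𝓝 L) := by
  obtain ⟨L, -, hL⟩ := (isCompact_Icc (a := a) (b := b)).ultrafilter_le_nhds (U.map f)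
    (le_principal_iff.2 (Filter.mem_map.2 (Filter.Eventually.of_forall h)))
  exact ⟨L, hL⟩

theorem exists_isLimitStructure {I : Type*} (U : Ultrafilter I) (M : I → CStructure S) {X : Type}
    [Nonempty X] (e : X → ∀ i, (M i).Carrier) : ∃ C ι, IsLimitStructure U M e C ι := by
  have exists_dist (x y) : ∃ L, Tendsto (fun i => dist (e x i) (e y i)) U (𝓝 L) :=
    exists_tendsto_of_mem_Icc U fun i => ⟨dist_nonneg, (M i).bounded _ _⟩
  have exists_rel (r) (v : Fin (S.arity r) → X) :
      ∃ L, Tendsto (fun i => (M i).rel r fun j => e (v j) i) U (𝓝 L) :=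
    exists_tendsto_of_mem_Icc U fun i => ⟨(M i).rel_nonneg _ _, (M i).rel_le_one _ _⟩
  choose D hD using exists_dist
  choose R hR using exists_rel
  let _ : PseudoMetricSpace X :=
    { dist := D
      dist_self := fun x => tendsto_nhds_unique (hD x x) (by simp)
      dist_comm := fun x y => tendsto_nhds_unique (hD x y) (by simpa only [dist_comm] using hD y x)
      dist_triangle := fun x y z => le_of_tendsto_of_tendsto' (hD x z) ((hD x y).add (hD y z))
        fun i => dist_triangle _ _ _ }
  have hRm (r) : HasModulus (S.modulus r) (R r) := by
    intro ε hε v w hvw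
    have hclose : ∀ᶠ i in (U : Filter I), ∀ j, dist (e (v j) i) (e (w j) i) < S.modulus r ε :=
      eventually_all.2 fun j => (hD (v j) (w j)).eventually_lt_const (hvw j)
    exact le_of_tendsto ((hR r v).sub (hR r w)).abs
      (hclose.mono fun i hi => (M i).rel_uc r ε hε _ _ hi)
  obtain ⟨C, ι, hι, hdist, hrel⟩ := exists_completion X
    (fun x y => le_of_tendsto' (hD x y) fun i => (M i).bounded _ _) R
    (fun r v => isClosed_Icc.mem_of_tendsto (hR r v)
      (Filter.Eventually.of_forall fun i => ⟨(M i).rel_nonneg _ _, (M i).rel_le_one _ _⟩)) hRm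
  exact ⟨C, ι, hι, fun x y => hdist x y ▸ hD x y, fun r v => hrel r v ▸ hR r v⟩

namespace IsLimitStructure

variable {I X : Type*} {l : Filter I} {M : I → CStructure S} {e : X → ∀ i, (M i).Carrier}
  {C : CStructure S} {ι : X → C.Carrier} {n : ℕ}

theorem tendsto_eval_neg {φ : CFormula S n} {v : Fin n → X}
    (h : Tendsto (fun i => (M i).eval n φ fun j => e (v j) i) l (𝓝 (C.eval n φ (ι ∘ v)))) :
    Tendsto (fun i => (M i).eval n (.neg φ) fun j => e (v j) i) l
      (𝓝 (C.eval n (.neg φ) (ι ∘ v))) := by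
  simpa only [CStructure.eval_neg] using tendsto_const_nhds.sub h

theorem tendsto_eval_inf (hC : IsLimitStructure l M e C ι) (he : HasWitnesses l M e)
    {φ : CFormula S (n + 1)}
    (h : ∀ v : Fin (n + 1) → X,
      Tendsto (fun i => (M i).eval (n + 1) φ fun j => e (v j) i) l (𝓝 (C.eval (n + 1) φ (ι ∘ v))))
    (v : Fin n → X) :
    Tendsto (fun i => (M i).eval n (.inf φ) fun j => e (v j) i) l
      (𝓝 (C.eval n (.inf φ) (ι ∘ v))) := by
  have hsnoc (x : X) :
      Tendsto (fun i => (M i).eval (n + 1) φ (Fin.snoc (fun j => e (v j) i) (e x i))) l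
        (𝓝 (C.eval (n + 1) φ (Fin.snoc (ι ∘ v) (ι x)))) := by
    rw [← Fin.comp_snoc]
    refine (h (Fin.snoc v x)).congr fun i => congrArg _ (funext ?_)
    exact Fin.lastCases (by simp only [Fin.snoc_last]) fun j => by simp only [Fin.snoc_castSucc]
  refine tendsto_order.2 ⟨fun r hr => ?_, fun r hr => ?_⟩
  · obtain ⟨s, hrs, hs⟩ := exists_between hr
    obtain ⟨x, hx⟩ := he n φ v (s - r) (sub_pos.2 hrs)
    have hlt := hs.trans_le (C.eval_inf_le φ (ι ∘ v) (ι x))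
    filter_upwards [hx, (hsnoc x).eventually_const_lt hlt] with i hi hsi
    linarith
  · obtain ⟨y, hy⟩ := C.exists_eval_snoc_lt hr
    have hopen : IsOpen {y | C.eval (n + 1) φ (Fin.snoc (ι ∘ v) y) < r} :=
      isOpen_lt ((C.continuous_eval φ).comp (by fun_prop)) continuous_const
    obtain ⟨x, hx⟩ := hC.denseRange.exists_mem_open hopen ⟨y, hy⟩
    filter_upwards [(hsnoc x).eventually_lt_const hx] with i hi
    exact ((M i).eval_inf_le φ _ _).trans_lt hi

theorem tendsto_eval (hC : IsLimitStructure l M e C ι) (he : HasWitnesses l M e)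
    (φ : CFormula S n) (v : Fin n → X) :
    Tendsto (fun i => (M i).eval n φ fun j => e (v j) i) l (𝓝 (C.eval n φ (ι ∘ v))) := by
  induction φ with
  | dst a b => exact hC.tendsto_dist (v a) (v b)
  | rel i ts => exact hC.tendsto_rel i fun j => v (ts j)
  | const q => exact tendsto_const_nhds
  | fmin φ ψ hφ hψ => exact (hφ v).min (hψ v)
  | fmax φ ψ hφ hψ => exact (hφ v).max (hψ v)
  | neg φ hφ => exact tendsto_eval_neg (hφ v)
  | addT φ ψ hφ hψ => exact tendsto_const_nhds.min ((hφ v).add (hψ v))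
  | subT φ ψ hφ hψ => exact tendsto_const_nhds.max ((hφ v).sub (hψ v))
  | absd φ ψ hφ hψ => exact ((hφ v).sub (hψ v)).abs
  | scale q φ hφ => exact tendsto_const_nhds.mul (hφ v)
  | inf φ hφ => exact hC.tendsto_eval_inf he hφ v
  | sup φ hφ =>
    simpa only [CStructure.eval_sup_eq] using
      tendsto_const_nhds.sub (hC.tendsto_eval_inf he (fun w => tendsto_eval_neg (hφ w)) v)

end IsLimitStructure

/-! ### Formulas over a set of variables -/

/-- `φ.rename s` is `φ` with its free variables substituted along `s`. -/
def CFormula.rename {n m : ℕ} : CFormula S n → (Fin n → Fin m) → CFormula S m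
  | .dst a b, s => .dst (s a) (s b)
  | .rel i ts, s => .rel i (s ∘ ts)
  | .const q, _ => .const q
  | .fmin φ ψ, s => .fmin (φ.rename s) (ψ.rename s)
  | .fmax φ ψ, s => .fmax (φ.rename s) (ψ.rename s)
  | .neg φ, s => .neg (φ.rename s)
  | .addT φ ψ, s => .addT (φ.rename s) (ψ.rename s)
  | .subT φ ψ, s => .subT (φ.rename s) (ψ.rename s)
  | .absd φ ψ, s => .absd (φ.rename s) (ψ.rename s)
  | .scale q φ, s => .scale q (φ.rename s)
  | .inf φ, s => .inf (φ.rename (Fin.snoc (Fin.castSucc ∘ s) (Fin.last m) : Fin (n + 1) → _))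
  | .sup φ, s => .sup (φ.rename (Fin.snoc (Fin.castSucc ∘ s) (Fin.last m) : Fin (n + 1) → _))

theorem snoc_comp_snoc_castSucc_last {X : Type*} {n m : ℕ} (s : Fin n → Fin m) (v : Fin m → X)
    (x : X) :
    (Fin.snoc v x : Fin (m + 1) → X) ∘
      (Fin.snoc (Fin.castSucc ∘ s) (Fin.last m) : Fin (n + 1) → Fin (m + 1)) =
      Fin.snoc (v ∘ s) x := by
  rw [Fin.comp_snoc, Fin.snoc_last, ← Function.comp_assoc, Fin.snoc_comp_castSucc]

theorem CStructure.eval_rename (M : CStructure S) {n m : ℕ} (φ : CFormula S n) (s : Fin n → Fin m)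
    (v : Fin m → M.Carrier) : M.eval m (φ.rename s) v = M.eval n φ (v ∘ s) := by
  induction φ generalizing m <;>
    simp only [CFormula.rename, CStructure.eval, Function.comp_apply,
      snoc_comp_snoc_castSucc_last, *]

theorem IsQF.rename {n m : ℕ} {φ : CFormula S n} (h : IsQF φ) (s : Fin n → Fin m) :
    IsQF (φ.rename s) := by
  induction h <;> constructor <;> assumption

/-- A formula whose free variables are taken from an arbitrary type `α`, typically the elements of
a structure together with a supply of genuine variables. -/
structure CFormulaOver (S : CSig) (α : Type*) where
  arity : ℕ
  formula : CFormula S arity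
  vars : Fin arity → α

namespace CFormulaOver

variable {α A B : Type*}

/-- The value of a formula over `α` under an assignment of its variables. -/
noncomputable def val (ψ : CFormulaOver S α) (M : CStructure S) (v : α → M.Carrier) : ℝ :=
  M.eval ψ.arity ψ.formula (v ∘ ψ.vars)

/-- The quantifier-free formulas over `α`. -/
def IsQF (ψ : CFormulaOver S α) : Prop :=
  _root_.IsQF ψ.formula

/-- The maximum of two formulas over `α`, on the disjoint union of their variable lists. -/
def fmax (ψ χ : CFormulaOver S α) : CFormulaOver S α where
  arity := ψ.arity + χ.arity
  formula := .fmax (ψ.formula.rename (Fin.castAdd χ.arity)) (χ.formula.rename (Fin.natAdd ψ.arity))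
  vars := Fin.append ψ.vars χ.vars

theorem val_fmax (ψ χ : CFormulaOver S α) (M : CStructure S) (v : α → M.Carrier) :
    (ψ.fmax χ).val M v = max (ψ.val M v) (χ.val M v) := by
  simp only [val, fmax, CStructure.eval, CStructure.eval_rename, Function.comp_def,
    Fin.append_left, Fin.append_right]

theorem exists_isQF_val_le_iff {ι : Type*} (F : Finset ι) (ψ : ι → CFormulaOver S α)
    (hψ : ∀ i ∈ F, (ψ i).IsQF) :
    ∃ θ : CFormulaOver S α, θ.IsQF ∧ ∀ (M : CStructure S) (v : α → M.Carrier) (r : ℝ), 0 ≤ r →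
      (θ.val M v ≤ r ↔ ∀ i ∈ F, (ψ i).val M v ≤ r) := by
  induction F using Finset.induction_on with
  | empty =>
    refine ⟨⟨0, .const 0, Fin.elim0⟩, .const 0, fun M v r hr => ?_⟩
    simpa [val, CStructure.eval, clampQ] using hr
  | insert a F _ ih =>
    obtain ⟨θ, hθ, hθF⟩ := ih fun i hi => hψ i (Finset.mem_insert_of_mem hi)
    refine ⟨(ψ a).fmax θ, ((hψ a (Finset.mem_insert_self a F)).rename _).fmax (hθ.rename _),
      fun M v r hr => ?_⟩
    rw [val_fmax, max_le_iff, hθF M v r hr, Finset.forall_mem_insert]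

theorem exists_injective_vars (ψ : CFormulaOver S α) :
    ∃ χ : CFormulaOver S α, Function.Injective χ.vars ∧ (ψ.IsQF → χ.IsQF) ∧
      ∀ (M : CStructure S) (v : α → M.Carrier), χ.val M v = ψ.val M v := by
  let s := Finset.univ.image ψ.vars
  have hs (j : Fin ψ.arity) : ψ.vars j ∈ s := Finset.mem_image_of_mem _ (Finset.mem_univ j)
  refine ⟨⟨s.card, ψ.formula.rename fun j => s.equivFin ⟨ψ.vars j, hs j⟩,
    fun k => s.equivFin.symm k⟩, Subtype.val_injective.comp s.equivFin.symm.injective,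
    fun h => h.rename _, fun M v => ?_⟩
  simp only [val, CStructure.eval_rename, Function.comp_def, Equiv.symm_apply_apply]

/-- `ψ.UnivLE M e r` says that `M` satisfies the universal condition `sup_b ψ(e, b) ≤ r`, where
the parameters `A` are interpreted by `e`, and `b` ranges over the assignments of `B`. -/
def UnivLE (ψ : CFormulaOver S (A ⊕ B)) (M : CStructure S) (e : A → M.Carrier) (r : ℝ) : Prop :=
  ∀ b : B → M.Carrier, ψ.val M (Sum.elim e b) ≤ r

theorem continuous_val (ψ : CFormulaOver S α) (M : CStructure S) : Continuous (ψ.val M) :=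
  (M.continuous_eval ψ.formula).comp (continuous_pi fun j => continuous_apply (ψ.vars j))

theorem UnivLE.of_denseRange {ψ : CFormulaOver S (A ⊕ B)} {M : CStructure S} {e : A → M.Carrier}
    {r : ℝ} {X : Type*} {ι : X → M.Carrier} (hι : DenseRange ι)
    (h : ∀ β : B → X, ψ.val M (Sum.elim e (ι ∘ β)) ≤ r) : ψ.UnivLE M e r := fun b =>
  (DenseRange.piMap fun _ => hι).induction_on b
    (isClosed_le ((ψ.continuous_val M).comp
      (continuous_pi (Sum.rec (fun _ => continuous_const) continuous_apply)))
      continuous_const) h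

end CFormulaOver

/-! ### Compactness -/

theorem IsLimitStructure.tendsto_val {I X α : Type*} {l : Filter I} {M : I → CStructure S}
    {e : X → ∀ i, (M i).Carrier} {C : CStructure S} {ι : X → C.Carrier}
    (hC : IsLimitStructure l M e C ι) (he : HasWitnesses l M e) (ψ : CFormulaOver S α)
    (v : α → X) :
    Tendsto (fun i => ψ.val (M i) fun a => e (v a) i) l (𝓝 (ψ.val C (ι ∘ v))) :=
  hC.tendsto_eval he ψ.formula (v ∘ ψ.vars)

theorem hasWitnesses_pi {I : Type*} (l : Filter I) (M : I → CStructure S) :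
    HasWitnesses l M fun (x : ∀ i, (M i).Carrier) i => x i := by
  intro n φ v ε hε
  choose x hx using fun i =>
    (M i).exists_eval_snoc_lt (lt_add_of_pos_right ((M i).eval n (.inf φ) fun j => v j i) hε)
  exact ⟨x, Filter.Eventually.of_forall fun i => (hx i).le⟩

theorem exists_univLE_of_finite {A B : Type} {Γ : Set (CFormulaOver S (A ⊕ B) × ℝ)}
    (hΓ : ∀ F : Finset (CFormulaOver S (A ⊕ B) × ℝ), ↑F ⊆ Γ → ∀ ε : ℝ, 0 < ε →
      ∃ (Q : CStructure S) (e : A → Q.Carrier), ∀ c ∈ F, c.1.UnivLE Q e (c.2 + ε)) :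
    ∃ (Q : CStructure S) (e : A → Q.Carrier), ∀ c ∈ Γ, c.1.UnivLE Q e c.2 := by
  choose Q e hQ using fun i : Finset (CFormulaOver S (A ⊕ B) × ℝ) × ℕ =>
    hΓ (i.1.filter (· ∈ Γ)) (fun c hc => (Finset.mem_filter.1 hc).2) (1 / ((i.2 : ℝ) + 1))
      Nat.one_div_pos_of_nat
  let U := Ultrafilter.of (atTop : Filter (Finset (CFormulaOver S (A ⊕ B) × ℝ) × ℕ))
  have hU : ↑U ≤ (atTop : Filter (Finset (CFormulaOver S (A ⊕ B) × ℝ) × ℕ)) :=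
    Ultrafilter.of_le _
  obtain ⟨C, ι, hC⟩ := exists_isLimitStructure U Q fun (x : ∀ i, (Q i).Carrier) i => x i
  let E (a : A) (i) : (Q i).Carrier := e i a
  refine ⟨C, ι ∘ E, fun c hc => .of_denseRange hC.denseRange fun β => ?_⟩
  have hlim := hC.tendsto_val (hasWitnesses_pi U Q) c.1 (Sum.elim E β)
  rw [Sum.comp_elim] at hlim
  have hbound : Tendsto (fun i : Finset (CFormulaOver S (A ⊕ B) × ℝ) × ℕ =>
      c.2 + 1 / ((i.2 : ℝ) + 1)) U (𝓝 c.2) := by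
    have hsnd : Tendsto Prod.snd (U : Filter (Finset (CFormulaOver S (A ⊕ B) × ℝ) × ℕ)) atTop :=
      tendsto_snd.mono_left (hU.trans_eq prod_atTop_atTop_eq.symm)
    simpa using (tendsto_one_div_add_atTop_nhds_zero_nat.comp hsnd).const_add c.2
  refine le_of_tendsto_of_tendsto hlim hbound ?_
  filter_upwards [hU (eventually_ge_atTop ({c}, 0))] with i hi
  have hci : c ∈ i.1.filter (· ∈ Γ) :=
    Finset.mem_filter.2 ⟨hi.1 (Finset.mem_singleton_self c), hc⟩
  refine (congrArg _ (funext ?_)).trans_le (hQ i c hci fun b => β b i)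
  exact Sum.rec (fun _ => rfl) fun _ => rfl

/-! ### Embeddings and diagrams -/

theorem eval_eq_of_nonpos {P Q : CStructure S} {n : ℕ} {v : Fin n → P.Carrier}
    {w : Fin n → Q.Carrier} {K : CFormula S n → Prop} (hneg : ∀ φ, K φ → K (.neg φ))
    (hsub : ∀ φ q, K φ → K (.subT φ (.const q)))
    (h : ∀ φ, K φ → P.eval n φ v ≤ 0 → Q.eval n φ w ≤ 0) {φ : CFormula S n} (hφ : K φ) :
    Q.eval n φ w = P.eval n φ v := by
  have hle (φ) (hφ : K φ) : Q.eval n φ w ≤ P.eval n φ v := by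
    refine le_of_forall_le_clampQ (P.eval_nonneg φ v) (Q.eval_le_one φ w) fun q hq => ?_
    rw [← P.eval_const q v, ← P.eval_subT_nonpos_iff] at hq
    rw [← Q.eval_const q w, ← Q.eval_subT_nonpos_iff]
    exact h _ (hsub φ q hφ) hq
  have hle_neg := hle _ (hneg φ hφ)
  rw [P.eval_neg, Q.eval_neg, sub_le_sub_iff_left] at hle_neg
  exact (hle φ hφ).antisymm hle_neg

namespace CEmbedding

/-- A map that preserves the values of quantifier-free formulas, as an embedding. -/
def ofIsQF {P Q : CStructure S} (E : P.Carrier → Q.Carrier)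
    (h : ∀ (n : ℕ) (φ : CFormula S n), IsQF φ → ∀ v, Q.eval n φ (E ∘ v) = P.eval n φ v) :
    CEmbedding P Q where
  toFun := E
  isometry x y := h 2 (.dst 0 1) (.dst 0 1) ![x, y]
  map_rel i v := h _ (.rel i id) (.rel i id) v

/-- Composition of embeddings. -/
def comp {M N P : CStructure S} (g : CEmbedding N P) (f : CEmbedding M N) : CEmbedding M P where
  toFun := g.toFun ∘ f.toFun
  isometry x y := (g.isometry _ _).trans (f.isometry x y)
  map_rel i v := (g.map_rel i (f.toFun ∘ v)).trans (f.map_rel i v)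

theorem Elementary.sval_eq {M N : CStructure S} {f : CEmbedding M N} (hf : f.Elementary)
    (φ : CSentence S) : N.sval φ = M.sval φ :=
  (N.sval_eq_eval φ _).trans (hf 0 φ fun i => i.elim0)

end CEmbedding

theorem exists_embedding_univLE {P : CStructure S} {B : Type}
    {Γ : Set (CFormulaOver S (P.Carrier ⊕ B) × ℝ)}
    (hΓ : ∀ ψ : CFormulaOver S (P.Carrier ⊕ B), ψ.IsQF → ψ.UnivLE P id 0 → ∀ ε : ℝ, 0 < ε →
      ∃ (Q : CStructure S) (e : P.Carrier → Q.Carrier),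
        (∀ c ∈ Γ, c.1.UnivLE Q e c.2) ∧ ψ.UnivLE Q e ε) :
    ∃ (Q : CStructure S) (E : CEmbedding P Q), (∀ c ∈ Γ, c.1.UnivLE Q E.toFun c.2) ∧
      ∀ ψ : CFormulaOver S (P.Carrier ⊕ B), ψ.IsQF → ψ.UnivLE P id 0 →
        ψ.UnivLE Q E.toFun 0 := by
  let Δ : Set (CFormulaOver S (P.Carrier ⊕ B) × ℝ) :=
    {c | c.1.IsQF ∧ c.1.UnivLE P id 0 ∧ c.2 = 0}
  have hfin (F : Finset (CFormulaOver S (P.Carrier ⊕ B) × ℝ)) (hF : ↑F ⊆ Γ ∪ Δ) (ε : ℝ)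
      (hε : 0 < ε) : ∃ (Q : CStructure S) (e : P.Carrier → Q.Carrier),
        ∀ c ∈ F, c.1.UnivLE Q e (c.2 + ε) := by
    have hFΔ : ∀ c ∈ F.filter (· ∈ Δ), c ∈ Δ := fun c hc => (Finset.mem_filter.1 hc).2
    obtain ⟨θ, hθ, hθF⟩ := CFormulaOver.exists_isQF_val_le_iff (F.filter (· ∈ Δ)) Prod.fst
      fun c hc => (hFΔ c hc).1
    obtain ⟨Q, e, hQΓ, hQθ⟩ := hΓ θ hθ
      (fun b => (hθF P _ 0 le_rfl).2 fun c hc => (hFΔ c hc).2.1 b) ε hε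
    refine ⟨Q, e, fun c hc b => ?_⟩
    rcases hF hc with hcΓ | hcΔ
    · exact (hQΓ c hcΓ b).trans (le_add_of_nonneg_right hε.le)
    · rw [hcΔ.2.2, zero_add]
      exact (hθF Q _ ε hε.le).1 (hQθ b) c (Finset.mem_filter.2 ⟨hc, hcΔ⟩)
  obtain ⟨Q, e, hQ⟩ := exists_univLE_of_finite hfin
  have hzero (ψ : CFormulaOver S (P.Carrier ⊕ B)) (hψ : ψ.IsQF) (h : ψ.UnivLE P id 0) :
      ψ.UnivLE Q e 0 := hQ (ψ, 0) (.inr ⟨hψ, h, rfl⟩)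
  have heval (n : ℕ) (φ : CFormula S n) (hφ : IsQF φ) (v : Fin n → P.Carrier) :
      Q.eval n φ (e ∘ v) = P.eval n φ v :=
    eval_eq_of_nonpos (v := v) (w := e ∘ v) (K := IsQF) (fun _ => .neg)
      (fun _ q hφ => .subT hφ (.const q)) (fun χ hχ h => hzero ⟨n, χ, .inl ∘ v⟩ hχ (fun _ => h)
        fun _ => Classical.arbitrary _) hφ
  exact ⟨Q, .ofIsQF e heval, fun c hc => hQ c (.inl hc), hzero⟩

/-! ### Blocks of quantifiers -/

namespace CFormula

/-- Quantification of the last `m` variables of a formula by `inf`. -/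
def infs {n : ℕ} : ∀ m : ℕ, CFormula S (n + m) → CFormula S n
  | 0, φ => φ
  | m + 1, φ => infs m (.inf φ)

/-- Quantification of all variables of a formula by `sup`. -/
def sups : ∀ {n : ℕ}, CFormula S n → CSentence S
  | 0, φ => φ
  | _ + 1, φ => sups (.sup φ)

end CFormula

theorem InfCl.infs {P : ∀ n, CFormula S n → Prop} {n m : ℕ} {φ : CFormula S (n + m)}
    (h : InfCl P φ) : InfCl P (φ.infs m) := by
  induction m with
  | zero => exact h
  | succ m ih => exact ih h.step

theorem SupCl.sups {P : ∀ n, CFormula S n → Prop} {n : ℕ} {φ : CFormula S n}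
    (h : SupCl P φ) : SupCl P φ.sups := by
  induction n with
  | zero => exact h
  | succ n ih => exact ih h.step

theorem IsQF.isPiN_two_sups_infs {n m : ℕ} {φ : CFormula S (n + m)} (h : IsQF φ) :
    IsPiN S 2 (φ.infs m).sups :=
  SupCl.sups (.base (InfCl.infs (.base h)))

namespace CStructure

variable (M : CStructure S) {n m : ℕ}

theorem eval_infs_le (φ : CFormula S (n + m)) (v : Fin n → M.Carrier) (w : Fin m → M.Carrier) :
    M.eval n (φ.infs m) v ≤ M.eval (n + m) φ (Fin.append v w) := by
  induction m with
  | zero =>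
    exact (congrArg (M.eval n φ) (funext fun j => (Fin.append_left v w j).symm)).le
  | succ m ih =>
    have hinf := M.eval_inf_le φ (Fin.append v (Fin.init w)) (w (Fin.last m))
    rw [← Fin.append_snoc, Fin.snoc_init_self] at hinf
    exact (ih (.inf φ) (Fin.init w)).trans hinf

theorem le_eval_infs {φ : CFormula S (n + m)} {v : Fin n → M.Carrier} {r : ℝ}
    (h : ∀ w : Fin m → M.Carrier, r ≤ M.eval (n + m) φ (Fin.append v w)) :
    r ≤ M.eval n (φ.infs m) v := by
  induction m with
  | zero =>
    exact (h Fin.elim0).trans_eq (congrArg (M.eval n φ) (funext (Fin.append_left v Fin.elim0)))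
  | succ m ih =>
    refine ih fun w => M.le_eval_inf fun x => ?_
    rw [← Fin.append_snoc]
    exact h _

theorem sval_sups_le {φ : CFormula S n} {r : ℝ} (h : ∀ v, M.eval n φ v ≤ r) :
    M.sval φ.sups ≤ r := by
  induction n with
  | zero => exact h _
  | succ n ih => exact ih fun v => M.eval_sup_le fun x => h _

theorem le_sval_sups (φ : CFormula S n) (v : Fin n → M.Carrier) :
    M.eval n φ v ≤ M.sval φ.sups := by
  induction n with
  | zero => exact (M.sval_eq_eval φ v).ge
  | succ n ih =>
    have hsup := M.le_eval_sup φ (Fin.init v) (v (Fin.last n))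
    rw [Fin.snoc_init_self] at hsup
    exact hsup.trans (ih (.sup φ) (Fin.init v))

theorem exists_lt_eval_of_lt_sval_sups {φ : CFormula S n} {r : ℝ} (h : r < M.sval φ.sups) :
    ∃ v, r < M.eval n φ v := by
  contrapose! h
  exact M.sval_sups_le h

end CStructure

namespace CFormulaOver

variable {A B : Type*} (ψ : CFormulaOver S (A ⊕ B)) (M : CStructure S)

/-- The formula underlying `ψ` with every variable duplicated: the variables from `A` are moved
to the first block and those from `B` to the second. The unused copies are harmless dummies. -/
def split : CFormula S (ψ.arity + ψ.arity) :=
  ψ.formula.rename fun j =>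
    Sum.elim (fun _ => Fin.castAdd ψ.arity j) (fun _ => Fin.natAdd ψ.arity j) (ψ.vars j)

variable {ψ}

theorem eval_split {v w : Fin ψ.arity → M.Carrier} {u : A ⊕ B → M.Carrier}
    (hu : ∀ j, u (ψ.vars j) = Sum.elim (fun _ => v j) (fun _ => w j) (ψ.vars j)) :
    M.eval _ ψ.split (Fin.append v w) = ψ.val M u := by
  rw [split, CStructure.eval_rename]
  refine congrArg _ (funext fun j => ?_)
  rw [Function.comp_apply, Function.comp_apply, hu]
  cases ψ.vars j
  · exact Fin.append_left v w j
  · exact Fin.append_right v w j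

variable (ψ) in
/-- The sentence `sup_a inf_b (1 - ψ(a, b))`. It is close to `1` exactly when some `a` makes all
values `ψ(a, b)` small. -/
def supInfNeg : CSentence S :=
  ((CFormula.neg ψ.split).infs ψ.arity).sups

theorem IsQF.isPiN_two_supInfNeg (hψ : ψ.IsQF) : IsPiN S 2 ψ.supInfNeg :=
  (hψ.rename _).neg.isPiN_two_sups_infs

theorem UnivLE.le_sval_supInfNeg {e : A → M.Carrier} {r : ℝ} (h : ψ.UnivLE M e r)
    (hinj : Function.Injective ψ.vars) : 1 - r ≤ M.sval ψ.supInfNeg := by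
  let x₀ : M.Carrier := Classical.arbitrary _
  let v (j : Fin ψ.arity) : M.Carrier := Sum.elim e (fun _ => x₀) (ψ.vars j)
  refine (M.le_eval_infs fun w => ?_).trans (M.le_sval_sups _ v)
  let b (y : B) : M.Carrier := Function.extend ψ.vars w (fun _ => x₀) (.inr y)
  have hb {j y} (hj : ψ.vars j = .inr y) : b y = w j := by
    simp only [b, ← hj, hinj.extend_apply]
  rw [M.eval_neg, eval_split M (u := Sum.elim e b) fun j => ?_]
  · exact sub_le_sub_left (h b) 1
  · cases hj : ψ.vars j with
    | inl a => simp only [Sum.elim_inl, v, hj]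
    | inr y => exact hb hj

theorem exists_univLE_of_lt_sval_supInfNeg {r : ℝ} (h : 1 - r < M.sval ψ.supInfNeg)
    (hinj : Function.Injective ψ.vars) : ∃ e : A → M.Carrier, ψ.UnivLE M e r := by
  let x₀ : M.Carrier := Classical.arbitrary _
  obtain ⟨v, hv⟩ := M.exists_lt_eval_of_lt_sval_sups h
  let e (a : A) : M.Carrier := Function.extend ψ.vars v (fun _ => x₀) (.inl a)
  have he {j a} (hj : ψ.vars j = .inl a) : e a = v j := by
    simp only [e, ← hj, hinj.extend_apply]
  refine ⟨e, fun b => ?_⟩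
  let w (j : Fin ψ.arity) : M.Carrier := Sum.elim (fun _ => x₀) b (ψ.vars j)
  have hlt := hv.trans_le (M.eval_infs_le (.neg ψ.split) v w)
  rw [M.eval_neg, eval_split M (u := Sum.elim e b) fun j => ?_] at hlt
  · exact (sub_lt_sub_iff_left 1).1 hlt |>.le
  · cases hj : ψ.vars j with
    | inl a => exact he hj
    | inr y => simp only [Sum.elim_inr, w, hj]

end CFormulaOver

/-! ### Existentially closed embeddings -/

/-- The open conditions on Π₂ sentences that follow from `T`. -/
def openPiTwoConsequences (T : CTheory S) : Set (CSentence S × ℝ) :=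
  {c | IsPiN S 2 c.1 ∧ 0 < c.2 ∧ EntailsOpen T c}

/-- `M` satisfies all the open conditions `φ < ε` in `A`. -/
def CStructure.SatOpen (M : CStructure S) (A : Set (CSentence S × ℝ)) : Prop :=
  ∀ c ∈ A, M.sval c.1 < c.2

theorem exists_satT_le_sval {T : CTheory S} {M : CStructure S}
    (hM : M.SatOpen (openPiTwoConsequences T)) {θ : CSentence S} (hθ : IsPiN S 2 θ)
    {r : ℝ} (hr : 0 < r) (hle : r ≤ M.sval θ) : ∃ Q : CStructure S, Q.SatT T ∧ r ≤ Q.sval θ := by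
  by_contra! hlt
  exact hle.not_gt (hM (θ, r) ⟨hθ, hr, hlt⟩)

namespace CEmbedding

variable {M N : CStructure S} {f : CEmbedding M N}

/-- An embedding `f : M → N` is existentially closed if every quantifier-free condition
`ψ(a, y) ≤ 0` with parameters `a` in `M` that holds for all `y` in `M` holds for all `y` in `N`;
equivalently, `inf_y φ(a, y)` has the same value in `M` and `N` for all quantifier-free `φ`. -/
def ExistentiallyClosed (f : CEmbedding M N) : Prop :=
  ∀ ψ : CFormulaOver S (M.Carrier ⊕ ℕ), ψ.IsQF → ψ.UnivLE M id 0 → ψ.UnivLE N f.toFun 0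

theorem injective (f : CEmbedding M N) : Function.Injective f.toFun :=
  (Isometry.of_dist_eq f.isometry).injective

end CEmbedding

theorem exists_existentiallyClosed_of_openPiTwoConsequences {T : CTheory S} {M : CStructure S}
    (hM : M.SatOpen (openPiTwoConsequences T)) :
    ∃ (N : CStructure S) (f : CEmbedding M N), N.SatT T ∧ f.ExistentiallyClosed := by
  let toUniv (c : CSentence S × ℝ) : CFormulaOver S (M.Carrier ⊕ ℕ) × ℝ :=
    (⟨0, c.1, Fin.elim0⟩, c.2)
  obtain ⟨N, f, hN, hf⟩ := exists_embedding_univLE (Γ := toUniv '' T) fun ψ hψ h ε hε => by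
    obtain ⟨χ, hinj, hχ, hval⟩ := ψ.exists_injective_vars
    have hχM : χ.UnivLE M id 0 := fun b => (hval M _).trans_le (h b)
    have hone : 1 ≤ M.sval χ.supInfNeg := by simpa using hχM.le_sval_supInfNeg M hinj
    obtain ⟨Q, hQT, hQ⟩ :=
      exists_satT_le_sval hM (hχ hψ).isPiN_two_supInfNeg one_pos hone
    obtain ⟨e, he⟩ := CFormulaOver.exists_univLE_of_lt_sval_supInfNeg Q
      ((sub_lt_self 1 hε).trans_le hQ) hinj
    refine ⟨Q, e, ?_, fun b => (hval Q _).symm.trans_le (he b)⟩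
    rintro _ ⟨c, hc, rfl⟩ _
    exact (Q.sval_eq_eval c.1 _).symm.trans_le (hQT c hc)
  refine ⟨N, f, fun c hc => ?_, hf⟩
  exact (N.sval_eq_eval c.1 _).trans_le (hN _ (Set.mem_image_of_mem toUniv hc) fun _ =>
    Classical.arbitrary _)

theorem exists_sumElim_apply_eq {A B : Type*} [Nonempty B] {f : A → B}
    (hf : Function.Injective f) {s : Set B} (hs : s.Countable) : ∃ (g : B → A ⊕ ℕ) (b : ℕ → B),
      (∀ x, g (f x) = .inl x) ∧ ∀ y ∈ s, Sum.elim f b (g y) = y := by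
  obtain ⟨code, hcode⟩ := Set.countable_iff_exists_injOn.1 hs
  refine ⟨Function.extend f .inl (.inr ∘ code), Function.invFunOn code s,
    hf.extend_apply _ _, fun y hy => ?_⟩
  by_cases hyf : ∃ x, f x = y
  · obtain ⟨x, rfl⟩ := hyf
    rw [hf.extend_apply, Sum.elim_inl]
  · rw [Function.extend_apply' _ _ _ hyf]
    exact hcode.leftInvOn_invFunOn hy

namespace CEmbedding

variable {M N : CStructure S} {f : CEmbedding M N}

theorem ExistentiallyClosed.exists_leftInverse_val_le (hf : f.ExistentiallyClosed)
    {ψ : CFormulaOver S N.Carrier} (hψ : ψ.IsQF) (h : ψ.val N id ≤ 0) {ε : ℝ} (hε : 0 < ε) :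
    ∃ e : N.Carrier → M.Carrier, Function.LeftInverse e f.toFun ∧ ψ.val M e ≤ ε := by
  by_contra! hlt
  obtain ⟨g, b, hg, hb⟩ :=
    exists_sumElim_apply_eq f.injective (Set.finite_range ψ.vars).countable
  obtain ⟨q, hq₀, hq⟩ := exists_rat_btwn (lt_min hε one_pos)
  have hclamp : clampQ q = q := clampQ_of_mem_Icc ⟨hq₀.le, hq.le.trans (min_le_right _ _)⟩
  let χ : CFormulaOver S (M.Carrier ⊕ ℕ) := ⟨ψ.arity, .subT (.const q) ψ.formula, g ∘ ψ.vars⟩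
  have hM : χ.UnivLE M id 0 := by
    intro b
    refine (M.eval_subT_nonpos_iff _ _ _).2 ?_
    rw [M.eval_const, hclamp]
    have hinv : Function.LeftInverse (Sum.elim id b ∘ g) f.toFun := fun x =>
      congrArg (Sum.elim id b) (hg x)
    exact (hq.le.trans (min_le_left _ _)).trans (hlt _ hinv).le
  have hN := (N.eval_subT_nonpos_iff _ _ _).1 (hf χ (.subT (.const q) hψ) hM b)
  rw [N.eval_const, hclamp] at hN
  refine hq₀.not_ge (hN.trans (Eq.trans_le (congrArg _ (funext fun j => ?_)) h))
  exact hb _ (Set.mem_range_self j)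

/-- The elementary diagram of `M` is approximately satisfiable with the quantifier-free diagram
of `N`, since any finite part of the latter is already approximately satisfied in `M`. -/
theorem ExistentiallyClosed.exists_elementary_comp (hf : f.ExistentiallyClosed) :
    ∃ (M' : CStructure S) (h : CEmbedding N M'), (h.comp f).Elementary := by
  let diagram : Set (CFormulaOver S (N.Carrier ⊕ Empty) × ℝ) :=
    {c | ∃ (n : ℕ) (φ : CFormula S n) (v : Fin n → M.Carrier),
      M.eval n φ v ≤ 0 ∧ c = (⟨n, φ, .inl ∘ f.toFun ∘ v⟩, 0)}
  obtain ⟨M', h, hM', -⟩ := exists_embedding_univLE (Γ := diagram) fun ψ hψ hN ε hε => by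
    obtain ⟨e, he, hle⟩ := hf.exists_leftInverse_val_le
      (ψ := ⟨ψ.arity, ψ.formula, Sum.elim id Empty.elim ∘ ψ.vars⟩) hψ (hN Empty.elim) hε
    refine ⟨M, e, ?_, fun _ => ?_⟩
    · rintro _ ⟨n, φ, v, hφ, rfl⟩ _
      exact (congrArg (M.eval n φ) (funext fun j => he (v j))).trans_le hφ
    · convert hle using 1
      refine congrArg (M.eval _ ψ.formula) (funext fun j => ?_)
      rcases hj : ψ.vars j with x | y
      · simp only [Function.comp_apply, hj, Sum.elim_inl, id]
      · exact y.elim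
  refine ⟨M', h, fun n φ v => ?_⟩
  exact eval_eq_of_nonpos (v := v) (w := (h.comp f).toFun ∘ v) (K := fun _ => True)
    (fun _ _ => trivial) (fun _ _ _ => trivial)
    (fun φ _ hφ => hM' _ ⟨n, φ, v, hφ, rfl⟩ Empty.elim) trivial

end CEmbedding

/-! ### Unions of elementary chains -/

section Chain

variable {M : ℕ → CStructure S} (f : ∀ i, CEmbedding (M i) (M (i + 1)))

/-- The composite `M i → M k` of the embeddings of a chain. -/
def chainMap {i k : ℕ} (h : i ≤ k) : (M i).Carrier → (M k).Carrier :=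
  Nat.leRecOn (C := fun i => (M i).Carrier) h fun {i} => (f i).toFun

theorem chainMap_self {i : ℕ} (x : (M i).Carrier) : chainMap f le_rfl x = x :=
  Nat.leRecOn_self (C := fun i => (M i).Carrier) x

theorem chainMap_succ {i k : ℕ} (h : i ≤ k) (x : (M i).Carrier) :
    chainMap f (h.trans k.le_succ) x = (f k).toFun (chainMap f h x) :=
  Nat.leRecOn_succ (C := fun i => (M i).Carrier) h x

theorem chainMap_trans {i j k : ℕ} (hij : i ≤ j) (hjk : j ≤ k) (x : (M i).Carrier) :
    chainMap f hjk (chainMap f hij x) = chainMap f (hij.trans hjk) x :=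
  (Nat.leRecOn_trans (C := fun i => (M i).Carrier) hij hjk x).symm

theorem chainMap_toFun {i k : ℕ} (h : i + 1 ≤ k) (x : (M i).Carrier) :
    chainMap f h ((f i).toFun x) = chainMap f (i.le_succ.trans h) x := by
  rw [← chainMap_trans f i.le_succ h, chainMap_succ f le_rfl, chainMap_self]

variable {f}

theorem eval_chainMap (hf : ∀ i, (f i).Elementary) {i k : ℕ} (h : i ≤ k) {n : ℕ}
    (φ : CFormula S n) (v : Fin n → (M i).Carrier) :
    (M k).eval n φ (chainMap f h ∘ v) = (M i).eval n φ v := by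
  induction k, h using Nat.le_induction with
  | base => exact congrArg _ (funext fun j => chainMap_self f (v j))
  | succ k hk ih =>
    rw [← ih, ← hf k]
    exact congrArg _ (funext fun j => chainMap_succ f hk (v j))

variable (f)

/-- The images of an element of a chain in the later members, as a thread; the entries before the
element appears are arbitrary. -/
noncomputable def chainThread (x : Σ i, (M i).Carrier) (k : ℕ) : (M k).Carrier :=
  if h : x.1 ≤ k then chainMap f h x.2 else Classical.arbitrary _

theorem chainThread_of_le {i k : ℕ} (h : i ≤ k) (x : (M i).Carrier) :
    chainThread f ⟨i, x⟩ k = chainMap f h x :=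
  dif_pos h

variable {f}

theorem hasWitnesses_chainThread (hf : ∀ i, (f i).Elementary) {l : Filter ℕ} (hl : l ≤ atTop) :
    HasWitnesses l M (chainThread f) := by
  intro n φ v ε hε
  let m := Finset.univ.sup fun j => (v j).1
  have hm (j) : (v j).1 ≤ m := Finset.le_sup (f := fun j => (v j).1) (Finset.mem_univ j)
  let w (j : Fin n) : (M m).Carrier := chainMap f (hm j) (v j).2
  obtain ⟨x, hx⟩ := (M m).exists_eval_snoc_lt (lt_add_of_pos_right ((M m).eval n (.inf φ) w) hε)
  refine ⟨⟨m, x⟩, ?_⟩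
  filter_upwards [hl (eventually_ge_atTop m)] with k hk
  have hv : (fun j => chainThread f (v j) k) = chainMap f hk ∘ w := by
    funext j
    exact (chainThread_of_le f ((hm j).trans hk) (v j).2).trans
      (chainMap_trans f (hm j) hk (v j).2).symm
  rw [hv, chainThread_of_le f hk, ← Fin.comp_snoc, eval_chainMap hf, eval_chainMap hf]
  exact hx.le

variable {l : Filter ℕ} [l.NeBot] {C : CStructure S} {ι : (Σ i, (M i).Carrier) → C.Carrier}

theorem IsLimitStructure.eval_chainThread (hC : IsLimitStructure l M (chainThread f) C ι)
    (hl : l ≤ atTop) (hf : ∀ i, (f i).Elementary) (i : ℕ) {n : ℕ} (φ : CFormula S n)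
    (v : Fin n → (M i).Carrier) : C.eval n φ (fun j => ι ⟨i, v j⟩) = (M i).eval n φ v := by
  refine tendsto_nhds_unique
    (hC.tendsto_eval (hasWitnesses_chainThread hf hl) φ fun j => ⟨i, v j⟩)
    (tendsto_const_nhds.congr' ?_)
  filter_upwards [hl (eventually_ge_atTop i)] with k hk
  rw [← eval_chainMap hf hk]
  exact congrArg _ (funext fun j => (chainThread_of_le f hk (v j)).symm)

theorem IsLimitStructure.apply_chain_succ (hC : IsLimitStructure l M (chainThread f) C ι)
    (hl : l ≤ atTop) (i : ℕ) (x : (M i).Carrier) : ι ⟨i + 1, (f i).toFun x⟩ = ι ⟨i, x⟩ := by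
  refine dist_eq_zero.1 (tendsto_nhds_unique (hC.tendsto_dist _ _)
    (tendsto_const_nhds.congr' ?_))
  filter_upwards [hl (eventually_ge_atTop (i + 1))] with k hk
  rw [chainThread_of_le f hk, chainThread_of_le f (i.le_succ.trans hk), chainMap_toFun, dist_self]

theorem exists_elementary_union (hf : ∀ i, (f i).Elementary) :
    ∃ (C : CStructure S) (g : ∀ i, CEmbedding (M i) C), (∀ i, (g i).Elementary) ∧
      (∀ i x, (g (i + 1)).toFun ((f i).toFun x) = (g i).toFun x) ∧
      Dense (⋃ i, Set.range (g i).toFun) := by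
  have hU : ↑(Ultrafilter.of (atTop : Filter ℕ)) ≤ (atTop : Filter ℕ) := Ultrafilter.of_le _
  have : Nonempty (Σ i, (M i).Carrier) := ⟨⟨0, Classical.arbitrary _⟩⟩
  obtain ⟨C, ι, hC⟩ := exists_isLimitStructure (Ultrafilter.of atTop) M (chainThread f)
  have heval (i n) (φ : CFormula S n) (v : Fin n → (M i).Carrier) :=
    hC.eval_chainThread hU hf i φ v
  refine ⟨C, fun i => .ofIsQF (fun x => ι ⟨i, x⟩) fun n φ _ => heval i n φ, heval,
    hC.apply_chain_succ hU, hC.denseRange.mono ?_⟩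
  exact Set.range_subset_iff.2 fun x => Set.mem_iUnion.2 ⟨x.1, x.2, rfl⟩

end Chain

/-! ### Preservation under unions of chains -/

/-- The class of models of `T` is preserved under unions of chains: the completion of the union of
an increasing chain of models of `T`, i.e. a structure into which the chain embeds compatibly and
with dense union of images, is a model of `T`. -/
def PreservedUnderChains (T : CTheory S) : Prop :=
  ∀ (M : ℕ → CStructure S) (f : ∀ i, CEmbedding (M i) (M (i + 1))), (∀ i, (M i).SatT T) →
    ∀ (N : CStructure S) (g : ∀ i, CEmbedding (M i) N),
      (∀ i (x : (M i).Carrier), (g (i + 1)).toFun ((f i).toFun x) = (g i).toFun x) →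
      Dense (⋃ i, Set.range (g i).toFun) → N.SatT T

theorem exists_satT_between_elementary {T : CTheory S} {M : CStructure S}
    (hM : M.SatOpen (openPiTwoConsequences T)) :
    ∃ (N M' : CStructure S) (f : CEmbedding M N) (h : CEmbedding N M'),
      N.SatT T ∧ (h.comp f).Elementary := by
  obtain ⟨N, f, hN, hf⟩ := exists_existentiallyClosed_of_openPiTwoConsequences hM
  obtain ⟨M', h, hh⟩ := hf.exists_elementary_comp
  exact ⟨N, M', f, h, hN, hh⟩

theorem PreservedUnderChains.satT_of_interleaved {T : CTheory S} (hT : PreservedUnderChains T)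
    {M N : ℕ → CStructure S} {f : ∀ i, CEmbedding (M i) (N i)}
    {h : ∀ i, CEmbedding (N i) (M (i + 1))} (hN : ∀ i, (N i).SatT T)
    (helem : ∀ i, ((h i).comp (f i)).Elementary) : (M 0).SatT T := by
  obtain ⟨C, g, hg, hcomp, hdense⟩ := exists_elementary_union helem
  have hC : C.SatT T := by
    refine hT N (fun i => (f (i + 1)).comp (h i)) hN C (fun i => (g (i + 1)).comp (h i))
      (fun i x => hcomp (i + 1) ((h i).toFun x))
      (hdense.mono (Set.iUnion_mono fun i => Set.range_subset_iff.2 fun x => ?_))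
    exact ⟨(f i).toFun x, hcomp i x⟩
  exact fun c hc => ((hg 0).sval_eq c.1).symm.trans_le (hC c hc)

theorem PreservedUnderChains.satT {T : CTheory S} (hT : PreservedUnderChains T)
    {M : CStructure S} (hM : M.SatOpen (openPiTwoConsequences T)) : M.SatT T := by
  have exists_next (P : {M : CStructure S // M.SatOpen (openPiTwoConsequences T)}) :
      ∃ (N : CStructure S) (P' : {M : CStructure S // M.SatOpen (openPiTwoConsequences T)})
        (f : CEmbedding P.1 N) (h : CEmbedding N P'.1),
        N.SatT T ∧ (h.comp f).Elementary := by
    obtain ⟨N, M', f, h, hN, helem⟩ := exists_satT_between_elementary P.2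
    exact ⟨N, ⟨M', fun c hc => (helem.sval_eq c.1).trans_lt (P.2 c hc)⟩, f, h, hN, helem⟩
  choose N next f h hN helem using exists_next
  let P (i : ℕ) : {M : CStructure S // M.SatOpen (openPiTwoConsequences T)} :=
    Nat.rec ⟨M, hM⟩ (fun _ => next) i
  exact hT.satT_of_interleaved (M := fun i => (P i).1) (N := fun i => N (P i))
    (f := fun i => f (P i)) (h := fun i => h (P i)) (fun i => hN _) fun i => helem _

end Development

/-- If the class of models of a theory `T` is preserved under unions of
chains — i.e. whenever `(Mᵢ)` is an increasing chain of models of `T` (given by embeddings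
`fᵢ : Mᵢ → M_{i+1}`), any completion `N` of the union (a structure in which the chain
embeds compatibly with dense union of images) is again a model of `T` — then `T` is
inductive, i.e. axiomatizable by open conditions `sup_x̄ inf_ȳ φ(x̄,ȳ) < ε` with `φ`
quantifier-free. -/
theorem inductive_of_chain_preservation (S : CSig) (T : CTheory S) (hT : IsTheory T)
    (hchain : ∀ (M : ℕ → CStructure S) (f : ∀ i, CEmbedding (M i) (M (i + 1))),
      (∀ i, (M i).SatT T) →
      ∀ (N : CStructure S) (g : ∀ i, CEmbedding (M i) N),
        (∀ i (x : (M i).Carrier), (g (i + 1)).toFun ((f i).toFun x) = (g i).toFun x) →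
        Dense (⋃ i, Set.range (g i).toFun) →
        N.SatT T) :
    IsInductiveTheory T := by
  have hT' : PreservedUnderChains T := hchain
  exact ⟨openPiTwoConsequences T, fun c hc => ⟨hc.1, hc.2.1⟩, fun M =>
    ⟨fun hM c hc => hc.2.2 M hM, hT'.satT⟩⟩
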